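/- For every δ₃ with 0 < δ₃ < 1 there exist α₃ > 0 and N ∈ ℕ such that for every n ≥ N, with probability at least 1 − δ₃ over the random l: for every sign pattern b ∈ {−1,1}^k there exist y', y'' ∈ Y_m^b and integers t', t'' with 0 < t' < α₃ · s and 0 < t'' < α₃ · s such that f_l(y') = t' mod n and f_l(y'') = −t'' mod n; that is, the mapped positions of y' and y'' fall on the two sides of 0 at distance of order the standard distance s. -/

import Mathlib

/-!
Let `B = [0, M)^k` with `M ≈ m / 2`, and let `A` be the set of all `f_l(y) + t` with `y ∈ B` and
`0 ≤ t < T`. If `A` fills more than half of `ZMod n`, then `A - A` is everything. Since `Y_m^b`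
contains a translate of `B - B`, every sign pattern `b` and every target then admit a `y ∈ Y_m^b`
with `f_l(y)` at distance less than `T` from the target; the targets `T` and `-T` give the two
sides of `0`. One event thus serves all sign patterns and both sides.

That `A` is this large follows from a second moment bound on the number of collisions
`f_l(y) + t = f_l(y') + t'`. By Cauchy-Schwarz there are always at least `(M^k T)² / n` of them, and
at least twice as many when `|A| ≤ n / 2`. On average there are at most
`(M^k T)² / n + M^k T (M^{k+1} / n + 1)`: for `y ≠ y'`, even when `n` is composite, `f_l(y - y')`
falls in a window of length `T` with probability at most `(T + M) / n`. Hence `A` is small with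
probability at most `(M^{k+1} + n) / (M^k T)`, and as `m^{k+1} ≤ n` for large `n`, a `T` of order
`s / δ₃` makes this at most `δ₃`.
-/

open scoped BigOperators

noncomputable section

attribute [local instance 10] Classical.propDecidable

/-- Cycle distance on `ZMod n`: `min(r, n - r)` where `r` is the representative of `y - x`. -/
def cycleDist (n : ℕ) [NeZero n] (x y : ZMod n) : ℕ :=
  min (y - x).val (n - (y - x).val)

/-- `f_l(y) = Σ yᵢ lᵢ` in `ZMod n`. -/
def fl {n k : ℕ} [NeZero n] (l : Fin k → ZMod n) (y : Fin k → ℤ) : ZMod n :=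
  ∑ i, (y i : ZMod n) * l i

/-- Probability of `E` when `l₁,…,l_k` are independent uniform elements of `ZMod n`,
modelled as a uniform element of the product space. -/
def lProb (n k : ℕ) [NeZero n] (E : (Fin k → ZMod n) → Prop) : ℝ :=
  ((Finset.univ.filter E).card : ℝ) / (Fintype.card (Fin k → ZMod n) : ℝ)

/-- `b` is a sign pattern in `{-1,1}^k`. -/
def IsSign {k : ℕ} (b : Fin k → ℤ) : Prop := ∀ i, b i = 1 ∨ b i = -1

/-- Membership in `Y_m^b = {y ∈ ℤ^k : 0 ≤ bᵢ yᵢ < m}`. -/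
def inYmb {k : ℕ} (b : Fin k → ℤ) (m : ℕ) (y : Fin k → ℤ) : Prop :=
  ∀ i, 0 ≤ b i * y i ∧ b i * y i < (m : ℤ)

/-- `m = m(n) = ⌈c n^{1/(2k+2)}⌉`. -/
def mOf (k : ℕ) (c : ℝ) (n : ℕ) : ℕ := ⌈c * (n : ℝ) ^ ((1 : ℝ) / (2 * (k : ℝ) + 2))⌉₊

/-- The standard distance `s = s(n) = n / m^k`. -/
def sOf (k : ℕ) (c : ℝ) (n : ℕ) : ℝ := (n : ℝ) / (mOf k c n : ℝ) ^ k

section Windows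

open Finset

variable {n : ℕ} [NeZero n]

lemma card_intCast_mul_eq_le_gcd (a : ℤ) (w : ZMod n) :
    #{x : ZMod n | (a : ZMod n) * x = w} ≤ Int.gcd a n := by
  set F : Finset (ZMod n) := {x | (a : ZMod n) * x = w} with hF
  obtain hempty | ⟨x₀, hx₀⟩ := F.eq_empty_or_nonempty
  · simp [hempty]
  have hd : 0 < Int.gcd a n := Int.gcd_pos_of_ne_zero_right _ (by exact_mod_cast NeZero.ne n)
  have hbezout : ((Int.gcd a n : ℕ) : ZMod n) = Int.gcdA a n * a := by
    have := congrArg (Int.cast : ℤ → ZMod n) (Int.gcd_eq_gcd_ab a n)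
    push_cast at this
    simpa [mul_comm] using this
  refine (card_le_card_of_injOn (· - x₀) (fun x hx => ?_) (sub_left_injective.injOn)).trans
    (IsAddCyclic.card_nsmul_eq_zero_le (α := ZMod n) hd)
  simp only [hF, coe_filter, mem_univ, true_and, Set.mem_ofPred_eq, mem_filter] at hx hx₀ ⊢
  rw [nsmul_eq_mul, hbezout, mul_assoc, mul_sub, hx, hx₀, sub_self, mul_zero]

lemma card_range_natCast_eq_le (w : ZMod n) (T : ℕ) :
    #{t ∈ range T | ((t : ℕ) : ZMod n) = w} ≤ T / n + 1 := by
  have hmod (t : ℕ) : (t : ZMod n) = w ↔ t ≡ w.val [MOD n] := by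
    rw [← ZMod.natCast_eq_natCast_iff, ZMod.natCast_zmod_val]
  simp_rw [hmod, ← Nat.count_eq_card_filter_range, Nat.count_modEq_card _ (NeZero.pos n)]
  split_ifs <;> omega

/-- Writing `d = gcd(a, n)`, only the `t` in one residue class modulo `d` contribute, and each of
them contributes at most `d`. -/
lemma sum_card_intCast_mul_eq_add_le {a : ℤ} (ha : a ≠ 0) (z : ZMod n) (T : ℕ) :
    ∑ t ∈ range T, #{x : ZMod n | (a : ZMod n) * x = z + t} ≤ T + a.natAbs := by
  set d := Int.gcd a n
  have hd : 0 < d := Int.gcd_pos_of_ne_zero_left _ ha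
  have : NeZero d := ⟨hd.ne'⟩
  have hda : (d : ℤ) ∣ a := Int.gcd_dvd_left _ _
  have hdn : d ∣ n := Int.natCast_dvd_natCast.1 (Int.gcd_dvd_right _ _)
  have hresidue (t : ℕ) (x : ZMod n) (hx : (a : ZMod n) * x = z + t) :
      (t : ZMod d) = -ZMod.castHom hdn (ZMod d) z := by
    have ha0 : (a : ZMod d) = 0 := (ZMod.intCast_zmod_eq_zero_iff_dvd _ _).2 hda
    have := congrArg (ZMod.castHom hdn (ZMod d)) hx
    rw [map_mul, map_add, map_intCast, map_natCast, ha0, zero_mul] at this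
    exact eq_neg_of_add_eq_zero_right this.symm
  have hterm (t : ℕ) : #{x : ZMod n | (a : ZMod n) * x = z + t} ≤
      if (t : ZMod d) = -ZMod.castHom hdn (ZMod d) z then d else 0 := by
    split_ifs with ht
    · exact card_intCast_mul_eq_le_gcd a _
    · simpa [filter_eq_empty_iff] using fun x hx => ht (hresidue t x hx)
  calc ∑ t ∈ range T, #{x : ZMod n | (a : ZMod n) * x = z + t}
      ≤ #{t ∈ range T | ((t : ℕ) : ZMod d) = -ZMod.castHom hdn (ZMod d) z} * d := by
        rw [← smul_eq_mul, ← sum_const, sum_filter]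
        exact sum_le_sum fun t _ => hterm t
    _ ≤ (T / d + 1) * d := Nat.mul_le_mul_right _ (card_range_natCast_eq_le _ _)
    _ = T / d * d + d := Nat.succ_mul _ _
    _ ≤ T + a.natAbs :=
        Nat.add_le_add (Nat.div_mul_le_self _ _)
          (Nat.le_of_dvd (Int.natAbs_pos.2 ha) (Int.natCast_dvd.1 hda))

end Windows

section LinearForm

open Finset

variable {n k : ℕ} [NeZero n]

lemma fl_zero (l : Fin k → ZMod n) : fl l 0 = 0 := by
  simp [fl]

lemma fl_add (l : Fin k → ZMod n) (y y' : Fin k → ℤ) : fl l (y + y') = fl l y + fl l y' := by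
  simp [fl, add_mul, sum_add_distrib]

lemma fl_sub (l : Fin k → ZMod n) (y y' : Fin k → ℤ) : fl l (y - y') = fl l y - fl l y' := by
  simp [fl, sub_mul, sum_sub_distrib]

lemma fl_add_single (l : Fin k → ZMod n) (y : Fin k → ℤ) (i : Fin k) (x : ZMod n) :
    fl (l + Pi.single i x) y = fl l y + (y i : ZMod n) * x := by
  simp [fl, mul_add, sum_add_distrib, Pi.single_apply]

lemma mul_card_fl_eq (y : Fin k → ℤ) (i : Fin k) (w : ZMod n) :
    n * #{l : Fin k → ZMod n | fl l y = w} =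
      ∑ l : Fin k → ZMod n, #{x : ZMod n | (y i : ZMod n) * x = w - fl l y} := by
  have hshift (x : ZMod n) :
      #{l : Fin k → ZMod n | fl (l + Pi.single i x) y = w} =
        #{l : Fin k → ZMod n | fl l y = w} :=
    card_equiv (Equiv.addRight (Pi.single i x)) (by simp)
  calc n * #{l : Fin k → ZMod n | fl l y = w}
      = ∑ x : ZMod n, #{l : Fin k → ZMod n | fl (l + Pi.single i x) y = w} := by
        simp [hshift, ZMod.card]
    _ = ∑ l : Fin k → ZMod n, #{x : ZMod n | (y i : ZMod n) * x = w - fl l y} := by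
        simp_rw [fl_add_single, ← eq_sub_iff_add_eq', card_filter]
        exact sum_comm

lemma mul_sum_card_fl_eq_add_le {y : Fin k → ℤ} {M : ℕ} (hM : ∀ i, (y i).natAbs ≤ M)
    (z : ZMod n) (T : ℕ) :
    n * ∑ t ∈ range T, #{l : Fin k → ZMod n | fl l y = z + t} ≤
      n ^ k * (T + M + if y = 0 then n else 0) := by
  split_ifs with hy
  · have hfiber (t : ℕ) : #{l : Fin k → ZMod n | fl l y = z + t} =
        if (t : ZMod n) = -z then n ^ k else 0 := by
      simp [hy, fl_zero, eq_comm (a := (0 : ZMod n)), add_eq_zero_iff_eq_neg', apply_ite card,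
        ZMod.card, filter_const]
    calc n * ∑ t ∈ range T, #{l : Fin k → ZMod n | fl l y = z + t}
        = n ^ k * (#{t ∈ range T | ((t : ℕ) : ZMod n) = -z} * n) := by
          simp_rw [hfiber, ← sum_filter, sum_const, smul_eq_mul]
          ring
      _ ≤ n ^ k * ((T / n + 1) * n) := by
          gcongr
          exact card_range_natCast_eq_le _ _
      _ ≤ n ^ k * (T + M + n) := by
          gcongr
          linarith [Nat.div_mul_le_self T n]
  · obtain ⟨i, hi⟩ := Function.ne_iff.1 hy
    simp_rw [mul_sum, mul_card_fl_eq y i, add_sub_right_comm]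
    rw [sum_comm]
    calc ∑ l : Fin k → ZMod n, ∑ t ∈ range T,
            #{x : ZMod n | (y i : ZMod n) * x = z - fl l y + t}
        ≤ ∑ _l : Fin k → ZMod n, (T + M) :=
          sum_le_sum fun l _ =>
            (sum_card_intCast_mul_eq_add_le hi _ T).trans (Nat.add_le_add_left (hM i) T)
      _ = n ^ k * (T + M + 0) := by simp [ZMod.card]

end LinearForm

section Collisions

open Finset

/-- The number of ordered pairs of elements of `s` on which `g` agrees, that is, the second moment
of the fibre sizes of `g` on `s`. -/
def collisions {α β : Type*} [DecidableEq β] (s : Finset α) (g : α → β) : ℕ :=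
  #{p ∈ s ×ˢ s | g p.1 = g p.2}

variable {ι α β : Type*} [DecidableEq β]

lemma sum_collisions [Fintype ι] (s : Finset α) (g : ι → α → β) :
    ∑ i, collisions s (g i) = ∑ p ∈ s, ∑ q ∈ s, #{i | g i p = g i q} := by
  simp_rw [collisions, card_filter, sum_product]
  rw [sum_comm]
  exact sum_congr rfl fun p _ => sum_comm

lemma collisions_eq_sum_sq (s : Finset α) (g : α → β) :
    collisions s g = ∑ x ∈ s.image g, #{p ∈ s | g p = x} ^ 2 := by
  rw [collisions, card_eq_sum_card_fiberwise (f := fun p => g p.1) (t := s.image g)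
    (fun p hp => mem_image_of_mem g (mem_product.1 (mem_filter.1 hp).1).1)]
  refine sum_congr rfl fun x _ => ?_
  rw [sq, ← card_product]
  congr 1
  ext p
  simp only [mem_filter, mem_product]
  grind

lemma card_sq_le_card_image_mul_collisions (s : Finset α) (g : α → β) :
    #s ^ 2 ≤ #(s.image g) * collisions s g := by
  rw [collisions_eq_sum_sq, card_eq_sum_card_image g s]
  exact sq_sum_le_card_mul_sum_sq

lemma card_small_image_add_card_mul_sq_le [Fintype ι] [Fintype β] (s : Finset α)
    (g : ι → α → β) :
    (#{i | 2 * #(s.image (g i)) ≤ Fintype.card β} + Fintype.card ι) * #s ^ 2 ≤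
      Fintype.card β * ∑ i, collisions s (g i) := by
  have hcollisions (i : ι) :
      ((if 2 * #(s.image (g i)) ≤ Fintype.card β then 1 else 0) + 1) * #s ^ 2 ≤
        Fintype.card β * collisions s (g i) := by
    have hcs := card_sq_le_card_image_mul_collisions s (g i)
    split_ifs with hsmall
    · calc (1 + 1) * #s ^ 2 ≤ 2 * (#(s.image (g i)) * collisions s (g i)) := by gcongr
        _ ≤ Fintype.card β * collisions s (g i) := by
          rw [← mul_assoc]
          gcongr
    · rw [zero_add, one_mul]
      exact hcs.trans (Nat.mul_le_mul_right _ (card_le_univ _))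
  rw [card_filter, Fintype.card_eq_sum_ones (α := ι), ← sum_add_distrib, sum_mul, mul_sum]
  exact sum_le_sum fun i _ => hcollisions i

end Collisions

section Probability

open Finset

variable {n k : ℕ} [NeZero n]

lemma one_sub_le_lProb {E : (Fin k → ZMod n) → Prop} {δ : ℝ}
    (hE : (#{l | ¬ E l} : ℝ) ≤ δ * n ^ k) : 1 - δ ≤ lProb n k E := by
  have hn : (0 : ℝ) < (n : ℝ) ^ k := pow_pos (Nat.cast_pos.2 (NeZero.pos n)) k
  have hcard : (Fintype.card (Fin k → ZMod n) : ℝ) = (n : ℝ) ^ k := by simp [ZMod.card]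
  have hcompl : (#{l | E l} : ℝ) + #{l | ¬ E l} = (n : ℝ) ^ k := by
    rw [← hcard, ← card_univ]
    exact_mod_cast card_filter_add_card_filter_not (s := univ) E
  rw [lProb, hcard, le_div_iff₀ hn]
  linarith

lemma lProb_mono {E F : (Fin k → ZMod n) → Prop} (h : ∀ l, E l → F l) :
    lProb n k E ≤ lProb n k F := by
  unfold lProb
  gcongr with l
  exact h l

end Probability

section Thickening

open Finset

variable {n k : ℕ} [NeZero n]

/-- The map `(y, t) ↦ f_l(y) + t`, whose image of `B ×ˢ range T` thickens `f_l(B)` to windows of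
length `T`. -/
def thicken (l : Fin k → ZMod n) (p : (Fin k → ℤ) × ℕ) : ZMod n :=
  fl l p.1 + p.2

/-- The event that the points `f_l(y) + t` with `y ∈ B` and `0 ≤ t < T` make up more than half of
`ZMod n`, so that their differences exhaust it. -/
def CoversHalf (B : Finset (Fin k → ℤ)) (T : ℕ) (l : Fin k → ZMod n) : Prop :=
  n < 2 * #((B ×ˢ range T).image (thicken l))

lemma mul_sum_collisions_thicken_le {B : Finset (Fin k → ℤ)} {M : ℕ}
    (hB : ∀ y ∈ B, ∀ y' ∈ B, ∀ i, (y i - y' i).natAbs ≤ M) (T : ℕ) :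
    n * ∑ l : Fin k → ZMod n, collisions (B ×ˢ range T) (thicken l) ≤
      #(B ×ˢ range T) * (n ^ k * (#B * (T + M) + n)) := by
  rw [sum_collisions, mul_sum, ← smul_eq_mul (#_)]
  refine sum_le_card_nsmul _ _ _ fun p hp => ?_
  have hp₁ : p.1 ∈ B := (mem_product.1 hp).1
  have hthicken (l : Fin k → ZMod n) (y : Fin k → ℤ) (t : ℕ) :
      thicken l p = thicken l (y, t) ↔ fl l (p.1 - y) = -(p.2 : ZMod n) + t := by
    rw [fl_sub, thicken, thicken]
    constructor <;> intro h <;> linear_combination h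
  calc n * ∑ q ∈ B ×ˢ range T, #{l : Fin k → ZMod n | thicken l p = thicken l q}
      = ∑ y ∈ B, n * ∑ t ∈ range T,
          #{l : Fin k → ZMod n | fl l (p.1 - y) = -(p.2 : ZMod n) + t} := by
        simp_rw [sum_product, hthicken, mul_sum]
    _ ≤ ∑ y ∈ B, n ^ k * (T + M + if p.1 - y = 0 then n else 0) :=
        sum_le_sum fun y hy => mul_sum_card_fl_eq_add_le (hB p.1 hp₁ y hy) _ T
    _ = n ^ k * (#B * (T + M) + n) := by
        simp [← mul_sum, sum_add_distrib, sub_eq_zero, hp₁]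

lemma card_not_coversHalf_mul_le {B : Finset (Fin k → ℤ)} {M : ℕ}
    (hB : ∀ y ∈ B, ∀ y' ∈ B, ∀ i, (y i - y' i).natAbs ≤ M) (T : ℕ) :
    #{l : Fin k → ZMod n | ¬ CoversHalf B T l} * (#B * T) ≤ n ^ k * (#B * M + n) := by
  have hlower : (#{l : Fin k → ZMod n | ¬ CoversHalf B T l} + n ^ k) * #(B ×ˢ range T) ^ 2 ≤
      n * ∑ l : Fin k → ZMod n, collisions (B ×ˢ range T) (thicken l) := by
    simpa only [CoversHalf, not_lt, Fintype.card_pi_const, ZMod.card] using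
      card_small_image_add_card_mul_sq_le (B ×ˢ range T) (thicken (n := n) (k := k))
  have hbounds := hlower.trans (mul_sum_collisions_thicken_le hB T)
  rw [card_product, card_range] at hbounds
  obtain hQ | hQ := (#B * T).eq_zero_or_pos
  · simp [hQ]
  refine Nat.le_of_mul_le_mul_right ?_ hQ
  linarith

lemma one_sub_le_lProb_coversHalf {B : Finset (Fin k → ℤ)} {M T : ℕ} {δ : ℝ}
    (hB : ∀ y ∈ B, ∀ y' ∈ B, ∀ i, (y i - y' i).natAbs ≤ M)
    (hT : (#B * M + n : ℝ) ≤ δ * (#B * T)) : 1 - δ ≤ lProb n k (CoversHalf B T) := by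
  have hn : (0 : ℝ) < n := Nat.cast_pos.2 (NeZero.pos n)
  have hQ : (0 : ℝ) < #B * T := by
    refine (by positivity : (0 : ℝ) ≤ #B * T).lt_of_ne' fun h => ?_
    rw [h, mul_zero] at hT
    exact (by positivity : (0 : ℝ) < #B * M + n).not_ge hT
  refine one_sub_le_lProb (le_of_mul_le_mul_right ?_ hQ)
  calc (#{l : Fin k → ZMod n | ¬ CoversHalf B T l} : ℝ) * (#B * T)
      ≤ n ^ k * (#B * M + n) := mod_cast card_not_coversHalf_mul_le hB T
    _ ≤ n ^ k * (δ * (#B * T)) := by gcongr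
    _ = δ * n ^ k * (#B * T) := by ring

end Thickening

section Orthants

open Finset

lemma exists_sub_eq_of_card_lt_two_mul {G : Type*} [AddGroup G] [Fintype G] {A : Finset G}
    (hA : Fintype.card G < 2 * #A) (z : G) : ∃ a ∈ A, ∃ a' ∈ A, a - a' = z := by
  classical
  obtain ⟨x, hx⟩ : (A ∩ A.image (z + ·)).Nonempty := by
    refine inter_nonempty_of_card_lt_card_add_card (subset_univ _) (subset_univ _) ?_
    rwa [card_image_of_injective _ (add_right_injective z), card_univ, ← two_mul]
  obtain ⟨hxA, hxz⟩ := mem_inter.1 hx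
  obtain ⟨a', ha', rfl⟩ := mem_image.1 hxz
  exact ⟨_, hxA, a', ha', add_sub_cancel_right z a'⟩

variable {n k : ℕ} [NeZero n]

lemma CoversHalf.exists_fl_sub_eq_add {B : Finset (Fin k → ℤ)} {T : ℕ} {l : Fin k → ZMod n}
    (hl : CoversHalf B T l) (z : ZMod n) :
    ∃ y ∈ B, ∃ y' ∈ B, ∃ t : ℤ, |t| < T ∧ fl l (y - y') = z + t := by
  obtain ⟨a, ha, a', ha', hz⟩ := exists_sub_eq_of_card_lt_two_mul (by rwa [ZMod.card]) z
  obtain ⟨⟨y, t⟩, hp, rfl⟩ := mem_image.1 ha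
  obtain ⟨⟨y', t'⟩, hp', rfl⟩ := mem_image.1 ha'
  simp only [mem_product, mem_range] at hp hp'
  refine ⟨y, hp.1, y', hp'.1, t' - t, by rw [abs_lt]; omega, ?_⟩
  simp only [thicken] at hz
  rw [fl_sub]
  push_cast
  linear_combination hz

/-- The cube `[0, M)^k` in `ℤ^k`; each `Y_m^b` with `m ≥ 2M - 1` contains a translate of its
difference set. -/
def latticeCube (k M : ℕ) : Finset (Fin k → ℤ) :=
  Fintype.piFinset fun _ => Ico 0 (M : ℤ)

lemma mem_latticeCube {M : ℕ} {y : Fin k → ℤ} : y ∈ latticeCube k M ↔ ∀ i, 0 ≤ y i ∧ y i < M := by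
  simp [latticeCube]

lemma card_latticeCube (k M : ℕ) : #(latticeCube k M) = M ^ k := by
  simp [latticeCube]

lemma natAbs_sub_le_of_mem_latticeCube {M : ℕ} {y y' : Fin k → ℤ}
    (hy : y ∈ latticeCube k M) (hy' : y' ∈ latticeCube k M) (i : Fin k) :
    (y i - y' i).natAbs ≤ M := by
  have := mem_latticeCube.1 hy i
  have := mem_latticeCube.1 hy' i
  omega

lemma inYmb_sub_add_of_mem_latticeCube {b : Fin k → ℤ} (hb : IsSign b) {M m : ℕ}
    (hm : 2 * M ≤ m + 1) {y y' : Fin k → ℤ} (hy : y ∈ latticeCube k M)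
    (hy' : y' ∈ latticeCube k M) :
    inYmb b m (y - y' + fun i => b i * ((M : ℤ) - 1)) := by
  intro i
  have := mem_latticeCube.1 hy i
  have := mem_latticeCube.1 hy' i
  simp only [Pi.add_apply, Pi.sub_apply]
  rcases hb i with h | h <;> rw [h] <;> constructor <;> omega

lemma CoversHalf.exists_inYmb_fl_eq_add {M T m : ℕ} (hm : 2 * M ≤ m + 1) {l : Fin k → ZMod n}
    (hl : CoversHalf (latticeCube k M) T l) {b : Fin k → ℤ} (hb : IsSign b) (z : ZMod n) :
    ∃ y, inYmb b m y ∧ ∃ t : ℤ, 0 < t ∧ t < 2 * T ∧ fl l y = z + t := by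
  obtain ⟨y, hy, y', hy', t, ht, hfl⟩ :=
    hl.exists_fl_sub_eq_add (z + T - fl l fun i => b i * ((M : ℤ) - 1))
  rw [abs_lt] at ht
  refine ⟨_, inYmb_sub_add_of_mem_latticeCube hb hm hy hy', T + t, by omega, by omega, ?_⟩
  rw [fl_add, hfl]
  push_cast
  ring

end Orthants

section Parameters

open Filter

lemma exists_window_length {k m n M : ℕ} (hm : 0 < m) (hmn : m ^ (k + 1) ≤ n) (hMm : M ≤ m)
    (hmM : m ≤ 2 * M) {δ : ℝ} (hδ₀ : 0 < δ) (hδ₁ : δ ≤ 1) :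
    ∃ T : ℕ, (M : ℝ) ^ k * M + n ≤ δ * ((M : ℝ) ^ k * T) ∧
      2 * (T : ℝ) ≤ 2 ^ (k + 3) / δ * (n / (m : ℝ) ^ k) := by
  have hm₁ : (1 : ℝ) ≤ m := mod_cast hm
  have hM : (0 : ℝ) < M := mod_cast (by omega : 0 < M)
  have hMm' : (M : ℝ) ≤ m := mod_cast hMm
  have hmM' : (m : ℝ) / 2 ≤ M := by
    rw [div_le_iff₀' two_pos]
    exact_mod_cast hmM
  have hmn' : (m : ℝ) ^ (k + 1) ≤ n := mod_cast hmn
  -- The factor `2 ^ (k + 1)` pays for `m ≤ 2 M` and for adding `M ^ (k + 1) ≤ n` to `n`.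
  set r : ℝ := 2 ^ (k + 1) / δ * (n / (m : ℝ) ^ k) with hr
  have hr₁ : 1 ≤ r := by
    refine one_le_mul_of_one_le_of_one_le ?_ ?_
    · exact (one_le_div₀ hδ₀).2 (hδ₁.trans (one_le_pow₀ one_le_two))
    · exact (one_le_div₀ (by positivity)).2 ((pow_le_pow_right₀ hm₁ k.le_succ).trans hmn')
  refine ⟨⌈r⌉₊, ?_, ?_⟩
  · calc (M : ℝ) ^ k * M + n ≤ m ^ (k + 1) + n := by
          rw [← pow_succ]
          gcongr
      _ ≤ n + n := by gcongr
      _ = δ * ((m / 2) ^ k * r) := by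
          rw [hr, div_pow, pow_succ]
          field_simp
          ring
      _ ≤ δ * ((M : ℝ) ^ k * ⌈r⌉₊) := by
          gcongr
          exact Nat.le_ceil r
  · calc 2 * (⌈r⌉₊ : ℝ) ≤ 2 * (r + r) := by
          gcongr
          exact (Nat.ceil_lt_add_one (by positivity)).le.trans (by gcongr)
      _ = 2 ^ (k + 3) / δ * (n / (m : ℝ) ^ k) := by
          rw [hr, pow_add, pow_add]
          ring

lemma mOf_pos (k : ℕ) {c : ℝ} (hc : 0 < c) {n : ℕ} (hn : 0 < n) : 0 < mOf k c n :=
  Nat.ceil_pos.2 (by positivity)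

lemma mOf_pow_succ_le (k : ℕ) {c : ℝ} (hc : 0 ≤ c) {n : ℕ} (hn : 1 ≤ n) :
    (mOf k c n : ℝ) ^ (k + 1) ≤ (c + 1) ^ (k + 1) * √n := by
  set r := (n : ℝ) ^ ((1 : ℝ) / (2 * (k : ℝ) + 2)) with hr
  have hr₁ : 1 ≤ r := Real.one_le_rpow (mod_cast hn) (by positivity)
  have hrpow : r ^ (k + 1) = √n := by
    rw [hr, ← Real.rpow_natCast, ← Real.rpow_mul n.cast_nonneg, Real.sqrt_eq_rpow]
    congr 1
    push_cast
    field_simp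
  calc (mOf k c n : ℝ) ^ (k + 1) ≤ (c * r + 1) ^ (k + 1) := by
        gcongr
        exact (Nat.ceil_lt_add_one (by positivity)).le
    _ ≤ ((c + 1) * r) ^ (k + 1) := by
        gcongr
        linarith
    _ = (c + 1) ^ (k + 1) * √n := by rw [mul_pow, hrpow]

lemma eventually_mOf_pow_succ_le (k : ℕ) {c : ℝ} (hc : 0 ≤ c) :
    ∀ᶠ n : ℕ in atTop, mOf k c n ^ (k + 1) ≤ n := by
  have hsqrt : Tendsto (fun n : ℕ => √n) atTop atTop :=
    Real.tendsto_sqrt_atTop.comp tendsto_natCast_atTop_atTop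
  filter_upwards [eventually_ge_atTop 1, hsqrt.eventually_ge_atTop ((c + 1) ^ (k + 1))]
    with n hn hcn
  have : (mOf k c n : ℝ) ^ (k + 1) ≤ n := by
    calc (mOf k c n : ℝ) ^ (k + 1) ≤ (c + 1) ^ (k + 1) * √n := mOf_pow_succ_le k hc hn
      _ ≤ √n * √n := by gcongr
      _ = n := Real.mul_self_sqrt n.cast_nonneg
  exact_mod_cast this

end Parameters

theorem points_on_both_sides_of_zero_general {n k m : ℕ} [NeZero n] (hm : 0 < m)
    (hmn : m ^ (k + 1) ≤ n) {δ : ℝ} (hδ₀ : 0 < δ) (hδ₁ : δ ≤ 1) :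
    1 - δ ≤ lProb n k (fun l =>
      ∀ b : Fin k → ℤ, IsSign b → ∀ z : ZMod n,
        ∃ y' y'' : Fin k → ℤ, inYmb b m y' ∧ inYmb b m y'' ∧
          ∃ t' t'' : ℤ,
            0 < t' ∧ (t' : ℝ) < 2 ^ (k + 3) / δ * (n / (m : ℝ) ^ k) ∧
            0 < t'' ∧ (t'' : ℝ) < 2 ^ (k + 3) / δ * (n / (m : ℝ) ^ k) ∧
            fl l y' = z + (t' : ZMod n) ∧ fl l y'' = z + ((-t'' : ℤ) : ZMod n)) := by
  set M := (m + 1) / 2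
  obtain ⟨T, hprob, hlength⟩ := exists_window_length (M := M) hm hmn (by omega) (by omega)
    hδ₀ hδ₁
  have hwindow {t : ℤ} (ht : t < 2 * T) : (t : ℝ) < 2 ^ (k + 3) / δ * (n / (m : ℝ) ^ k) :=
    lt_of_lt_of_le (by exact_mod_cast ht) hlength
  refine (one_sub_le_lProb_coversHalf (B := latticeCube k M) (M := M) (T := T)
    (fun y hy y' hy' => natAbs_sub_le_of_mem_latticeCube hy hy') ?_).trans
    (lProb_mono fun l hl b hb z => ?_)
  · simpa only [card_latticeCube, Nat.cast_pow] using hprob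
  obtain ⟨y', hy', t', ht'₀, ht', hfl'⟩ :=
    hl.exists_inYmb_fl_eq_add (m := m) (by omega) hb z
  obtain ⟨y'', hy'', t'', ht''₀, ht'', hfl''⟩ :=
    hl.exists_inYmb_fl_eq_add (m := m) (by omega) hb (z - 2 * T)
  refine ⟨y', y'', hy', hy'', t', 2 * T - t'', ht'₀, hwindow ht', by omega,
    hwindow (by omega), hfl', ?_⟩
  rw [hfl'']
  push_cast
  ring

/-- for every `0 < δ₃ < 1` there are `α₃ > 0` and `N` such that for all
`n ≥ N`, with probability at least `1 - δ₃` over `l`: for every sign pattern `b` there are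
`y', y'' ∈ Y_m^b` and integers `0 < t', t'' < α₃ s` with `f_l(y') = t' mod n` and
`f_l(y'') = -t'' mod n`, i.e. mapped points on both sides of `0` at distance of order `s`. -/
theorem points_on_both_sides_of_zero (k : ℕ) (hk : 1 ≤ k) (c : ℝ) (hc : 0 < c)
    (δ₃ : ℝ) (h0 : 0 < δ₃) (h1 : δ₃ < 1) :
    ∃ α₃ : ℝ, 0 < α₃ ∧ ∃ N : ℕ, ∀ (n : ℕ) [NeZero n], N ≤ n →
      1 - δ₃ ≤ lProb n k (fun l =>
        ∀ b : Fin k → ℤ, IsSign b →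
          ∃ y' y'' : Fin k → ℤ, inYmb b (mOf k c n) y' ∧ inYmb b (mOf k c n) y'' ∧
            ∃ t' t'' : ℤ,
              0 < t' ∧ (t' : ℝ) < α₃ * sOf k c n ∧
              0 < t'' ∧ (t'' : ℝ) < α₃ * sOf k c n ∧
              fl l y' = (t' : ZMod n) ∧ fl l y'' = ((-t'' : ℤ) : ZMod n)) := by
  obtain ⟨N, hN⟩ := Filter.eventually_atTop.1 (eventually_mOf_pow_succ_le k hc.le)
  refine ⟨2 ^ (k + 3) / δ₃, by positivity, N, fun n _ hn => ?_⟩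
  refine (points_on_both_sides_of_zero_general (mOf_pos k hc (NeZero.pos n)) (hN n hn) h0
    h1.le).trans (lProb_mono fun l hl b hb => ?_)
  simpa only [zero_add, sOf] using hl b hb 0
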